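/- For all natural numbers m, n, p with m ≤ n+1, Maker has a winning strategy for the (p,p)-crossing game on S_{m×n}. -/

import Mathlib

namespace CrossingGames

/-- A vertex of the square integer lattice `ℤ²`. -/
abbrev Vtx : Type := ℤ × ℤ

/-- An edge of the square integer lattice `ℤ²`, encoded as a base vertex together with a
direction: `(v, true)` is the horizontal edge joining `v = (x,y)` to `(x+1,y)`, while
`(v, false)` is the vertical edge joining `v = (x,y)` to `(x,y+1)`. -/
abbrev Edge : Type := Vtx × Bool

/-- The two endpoints of an edge. -/
def ends (e : Edge) : Vtx × Vtx :=
  (e.1, if e.2 then (e.1.1 + 1, e.1.2) else (e.1.1, e.1.2 + 1))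

/-- The edge `e` joins the vertices `u` and `v`. -/
def joins (e : Edge) (u v : Vtx) : Prop :=
  ((ends e).1 = u ∧ (ends e).2 = v) ∨ ((ends e).1 = v ∧ (ends e).2 = u)

/-- The vertex set of the grid `Λ_{m×n}`: all `(x,y) ∈ ℤ²` with `1 ≤ x ≤ m`, `1 ≤ y ≤ n`. -/
def lamVtx (m n : ℕ) : Set Vtx :=
  {v | 1 ≤ v.1 ∧ v.1 ≤ (m : ℤ) ∧ 1 ≤ v.2 ∧ v.2 ≤ (n : ℤ)}

/-- The edge set of the grid `Λ_{m×n}`: lattice edges with both endpoints in `Λ_{m×n}`. -/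
def lamEdges (m n : ℕ) : Set Edge :=
  {e | (ends e).1 ∈ lamVtx m n ∧ (ends e).2 ∈ lamVtx m n}

/-- The edge set of the board `S_{m×n}`: the grid `Λ_{m×n}` with all of its leftmost and
rightmost vertical edges deleted. -/
def sEdges (m n : ℕ) : Set Edge :=
  {e ∈ lamEdges m n | ¬ (e.2 = false ∧ (e.1.1 = 1 ∨ e.1.1 = (m : ℤ)))}

/-- The list of consecutive pairs of a list. -/
def cp {α : Type*} (l : List α) : List (α × α) := l.zip l.tail

/-- `S` contains all the edges of a left-right crossing path of a board with `m` columns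
and `n` rows: a path of edges of `S` joining a vertex `(1,y)` on the left-hand side of the
board to a vertex `(m,y')` on its right-hand side. -/
def HasCrossing (m n : ℕ) (S : Set Edge) : Prop :=
  ∃ l : List Vtx,
    (∃ v, l.head? = some v ∧ v.1 = 1) ∧
    (∃ v, l.getLast? = some v ∧ v.1 = (m : ℤ)) ∧
    (∀ v ∈ l, v ∈ lamVtx m n) ∧
    ∀ p ∈ cp l, ∃ e ∈ S, joins e p.1 p.2

/-- A strategy: given the list of all moves played so far (oldest first), produce the
next move (a finite set of edges to claim). -/
abbrev Strategy : Type := List (Finset Edge) → Finset Edge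

/-- The union of the moves sitting in positions of the given parity of a history
(`true`: positions 0, 2, 4, …; `false`: positions 1, 3, 5, …). -/
def altUnion : Bool → List (Finset Edge) → Finset Edge
  | _, [] => ∅
  | true, mv :: h => mv ∪ altUnion false h
  | false, _ :: h => altUnion true h

/-- All edges claimed by the player moving first (i.e. on even positions) in a history. -/
def firstClaimed (h : List (Finset Edge)) : Finset Edge := altUnion true h

/-- All edges claimed by the player moving second (i.e. on odd positions) in a history. -/
def secondClaimed (h : List (Finset Edge)) : Finset Edge := altUnion false h

/-- All edges claimed so far in a history. -/
def allClaimed (h : List (Finset Edge)) : Finset Edge := h.foldr (· ∪ ·) ∅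

/-- The history of moves (oldest first) after `t` full rounds, when the player moving
first uses strategy `σ` and the player moving second uses strategy `τ`. -/
def hist (σ τ : Strategy) : ℕ → List (Finset Edge)
  | 0 => []
  | t + 1 =>
    let h := hist σ τ t
    h ++ [σ h, τ (h ++ [σ h])]

/-- The move `mv` is legal on `board` after the history `h` for a player of bias `k`: it
consists of as-yet-unclaimed edges of the board, and there are exactly `k` of them, unless
fewer than `k` unclaimed edges remain, in which case the player claims all of them. -/
def LegalMove (board : Set Edge) (h : List (Finset Edge)) (k : ℕ) (mv : Finset Edge) : Prop :=
  (↑mv : Set Edge) ⊆ board \ ↑(allClaimed h) ∧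
    (mv.card = k ∨ (mv.card < k ∧ board \ ↑(allClaimed h) ⊆ (↑mv : Set Edge)))

/-- The player moving first (with bias `p`) always moves legally when playing `σ`
against `τ`. -/
def FirstLegal (board : Set Edge) (p : ℕ) (σ τ : Strategy) : Prop :=
  ∀ t, LegalMove board (hist σ τ t) p (σ (hist σ τ t))

/-- The player moving second (with bias `q`) always moves legally when playing `τ`
against `σ`. -/
def SecondLegal (board : Set Edge) (q : ℕ) (σ τ : Strategy) : Prop :=
  ∀ t, LegalMove board (hist σ τ t ++ [σ (hist σ τ t)]) q (τ (hist σ τ t ++ [σ (hist σ τ t)]))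

/-- Maker (playing first and claiming `p` edges per turn) has a winning strategy for the
Maker–Breaker game on `board` in which Breaker claims `q` edges per turn: she can
guarantee that at some point her claimed edges satisfy the winning condition `win`. -/
def MakerWins (board : Set Edge) (win : Set Edge → Prop) (p q : ℕ) : Prop :=
  ∃ σ : Strategy, ∀ τ : Strategy, SecondLegal board q σ τ →
    FirstLegal board p σ τ ∧ ∃ t, win ↑(firstClaimed (hist σ τ t))

/-- Breaker (playing second and claiming `q` edges per turn) has a winning strategy for
the Maker–Breaker game on `board` in which Maker claims `p` edges per turn: he can
forever prevent Maker's claimed edges from satisfying the winning condition `win`. -/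
def BreakerWins (board : Set Edge) (win : Set Edge → Prop) (p q : ℕ) : Prop :=
  ∃ τ : Strategy, ∀ σ : Strategy, FirstLegal board p σ τ →
    SecondLegal board q σ τ ∧ ∀ t, ¬ win ↑(firstClaimed (hist σ τ t))

section Abstract
variable {α : Type*} [DecidableEq α]

def Leg (E C : Finset α) (p : ℕ) (a : Finset α) : Prop :=
  a ⊆ E \ C ∧ (a.card = p ∨ (a.card < p ∧ E \ C ⊆ a))

lemma exists_leg (E C s : Finset α) (p : ℕ) (hs : s ⊆ E \ C) (hc : s.card ≤ p) :
    ∃ a, s ⊆ a ∧ Leg E C p a := by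
  by_cases h : p ≤ (E \ C).card
  · obtain ⟨a, h1, h2, h3⟩ := Finset.exists_subsuperset_card_eq hs hc h
    exact ⟨a, h1, h2, Or.inl h3⟩
  · exact ⟨E \ C, hs, Finset.Subset.refl _, Or.inr ⟨by omega, Finset.Subset.refl _⟩⟩

lemma Leg.card_le {E C a : Finset α} {p : ℕ} (h : Leg E C p a) : a.card ≤ p := by
  rcases h.2 with h | h
  · omega
  · omega

def PW (E : Finset α) (W : Finset α → Prop) (p : ℕ) : ℕ → Finset α → Finset α → Prop
  | 0, M, _ => W M
  | k + 1, M, B => ∃ a, Leg E (M ∪ B) p a ∧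
      ∀ b, Leg E (M ∪ a ∪ B) p b → PW E W p k (M ∪ a) (B ∪ b)

lemma steal (E : Finset α) (W : Finset α → Prop) (p : ℕ) (hp : 1 ≤ p)
    (hmono : ∀ s t, s ⊆ t → W s → W t) (φ : α → α) (hinv : ∀ x, φ (φ x) = x)
    (hE : ∀ x ∈ E, φ x ∈ E) (hW : ∀ M, ¬ W M → W ((E \ M).image φ)) :
    ∀ (k : ℕ) (M B M' B' : Finset α), (∀ x ∈ B', φ x ∈ M) → (∀ x ∈ B, φ x ∈ M') →
      (E \ (M' ∪ B')).card ≤ k → ¬ PW E W p k M' B' →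
      ∀ b, Leg E (M ∪ B) p b → PW E W p k M (B ∪ b) := by
  intro k
  induction k with
  | zero =>
    intro M B M' B' h1 h2 h3 h4 b hb
    simp only [PW] at h4 ⊢
    refine hmono _ _ ?_ (hW M' h4)
    intro z hz
    obtain ⟨x, hx, rfl⟩ := Finset.mem_image.1 hz
    apply h1
    have h5 : E \ (M' ∪ B') = ∅ := by simpa using h3
    by_contra hxB
    have : x ∈ E \ (M' ∪ B') := by
      simp only [Finset.mem_sdiff, Finset.mem_union] at hx ⊢
      tauto
    rw [h5] at this
    simp at this
  | succ k ih =>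
    intro M B M' B' h1 h2 h3 h4 b hb
    have hinj : Function.Injective φ := Function.Involutive.injective hinv
    obtain ⟨a', ha's, ha'⟩ := exists_leg E (M' ∪ B') (b.image φ \ M') p (by
      intro z hz
      simp only [Finset.mem_sdiff, Finset.mem_image] at hz
      obtain ⟨⟨x, hx, rfl⟩, hzM⟩ := hz
      have hx' := hb.1 hx
      simp only [Finset.mem_sdiff, Finset.mem_union] at hx' ⊢
      refine ⟨hE _ hx'.1, ?_⟩
      rintro (h | h)
      · exact hzM h
      · have := h1 _ h
        rw [hinv] at this
        tauto) ((Finset.card_le_card Finset.sdiff_subset).trans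
          (Finset.card_image_le.trans hb.card_le))
    have h5 : ∃ b', Leg E (M' ∪ a' ∪ B') p b' ∧ ¬ PW E W p k (M' ∪ a') (B' ∪ b') := by
      by_contra hcon
      push Not at hcon
      exact h4 ⟨a', ha', hcon⟩
    obtain ⟨b', hb', h6⟩ := h5
    have h2' : ∀ x ∈ B ∪ b, φ x ∈ M' ∪ a' := by
      intro x hx
      rw [Finset.mem_union] at hx ⊢
      by_cases hxM : φ x ∈ M'
      · exact Or.inl hxM
      · rcases hx with hx | hx
        · exact Or.inl (h2 x hx)
        · right
          apply ha's
          simp only [Finset.mem_sdiff, Finset.mem_image]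
          exact ⟨⟨x, hx, rfl⟩, hxM⟩
    obtain ⟨a, has, ha⟩ := exists_leg E (M ∪ (B ∪ b)) (b'.image φ \ M) p (by
      intro z hz
      simp only [Finset.mem_sdiff, Finset.mem_image] at hz
      obtain ⟨⟨x, hx, rfl⟩, hzM⟩ := hz
      have hx' := hb'.1 hx
      rw [Finset.mem_sdiff] at hx'
      rw [Finset.mem_sdiff, Finset.mem_union]
      refine ⟨hE _ hx'.1, ?_⟩
      rintro (h | h)
      · exact hzM h
      · have := h2' _ h
        rw [hinv] at this
        exact hx'.2 (Finset.mem_union_left _ this)) ((Finset.card_le_card Finset.sdiff_subset).trans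
          (Finset.card_image_le.trans hb'.card_le))
    refine ⟨a, ha, ?_⟩
    intro b2 hb2
    refine ih (M ∪ a) (B ∪ b) (M' ∪ a') (B' ∪ b') ?_ h2' ?_ h6 b2 hb2
    · intro x hx
      rw [Finset.mem_union] at hx ⊢
      by_cases hxM : φ x ∈ M
      · exact Or.inl hxM
      · rcases hx with hx | hx
        · exact Or.inl (h1 x hx)
        · right
          apply has
          simp only [Finset.mem_sdiff, Finset.mem_image]
          exact ⟨⟨x, hx, rfl⟩, hxM⟩
    · by_cases hne : a' = ∅
      · have h7 : E \ (M' ∪ B') ⊆ ∅ := by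
          rcases ha'.2 with h | h
          · rw [hne] at h
            simp at h
            omega
          · rw [← hne]
            exact h.2
        have h8 : E \ (M' ∪ a' ∪ (B' ∪ b')) ⊆ ∅ := by
          refine Finset.Subset.trans ?_ h7
          intro x
          simp only [Finset.mem_sdiff, Finset.mem_union]
          tauto
        rw [Finset.subset_empty.1 h8]
        simp
      · obtain ⟨x, hx⟩ := Finset.nonempty_iff_ne_empty.2 hne
        have : (E \ (M' ∪ a' ∪ (B' ∪ b'))).card < (E \ (M' ∪ B')).card := by
          apply Finset.card_lt_card
          rw [Finset.ssubset_iff_of_subset]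
          · refine ⟨x, ha'.1 hx, ?_⟩
            simp only [Finset.mem_sdiff, Finset.mem_union]
            tauto
          · intro x
            simp only [Finset.mem_sdiff, Finset.mem_union]
            tauto
        omega

lemma exists_PW (E : Finset α) (W : Finset α → Prop) (p : ℕ) (hp : 1 ≤ p)
    (hmono : ∀ s t, s ⊆ t → W s → W t) (φ : α → α) (hinv : ∀ x, φ (φ x) = x)
    (hE : ∀ x ∈ E, φ x ∈ E) (hW : ∀ M, ¬ W M → W ((E \ M).image φ)) :
    ∃ k, PW E W p k ∅ ∅ := by
  by_cases h : PW E W p E.card ∅ ∅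
  · exact ⟨_, h⟩
  · refine ⟨E.card + 1, ?_⟩
    obtain ⟨a, -, ha⟩ := exists_leg E (∅ ∪ ∅) ∅ p (by simp) (by simp)
    refine ⟨a, ha, ?_⟩
    intro b hb
    exact steal E W p hp hmono φ hinv hE hW E.card (∅ ∪ a) ∅ ∅ ∅ (by simp) (by simp) (by simp) h b hb

end Abstract

lemma altUnion_append (h : List (Finset Edge)) (hl : Even h.length) (c : Bool)
    (g : List (Finset Edge)) : altUnion c (h ++ g) = altUnion c h ∪ altUnion c g := by
  induction h using List.twoStepInduction generalizing c with
  | nil => simp [altUnion]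
  | singleton x => simp at hl
  | cons_cons x y l ih _ =>
    have : Even l.length := by
      simp only [List.length_cons] at hl
      rcases hl with ⟨r, hr⟩
      exact ⟨r - 1, by omega⟩
    cases c <;> simp [altUnion, ih this, Finset.union_assoc]

lemma allClaimed_eq (h : List (Finset Edge)) :
    allClaimed h = firstClaimed h ∪ secondClaimed h := by
  unfold firstClaimed secondClaimed
  induction h with
  | nil => simp [allClaimed, altUnion]
  | cons x l ih =>
    have : allClaimed (x :: l) = x ∪ allClaimed l := rfl
    rw [this, ih]
    simp only [altUnion]
    ext z
    simp only [Finset.mem_union]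
    tauto

lemma hist_length (σ τ : Strategy) (t : ℕ) : (hist σ τ t).length = 2 * t := by
  induction t with
  | zero => rfl
  | succ t ih => simp [hist, ih]; omega

lemma legalMove_iff (E : Finset Edge) (board : Set Edge) (hb : board = ↑E)
    (h : List (Finset Edge)) (k : ℕ) (mv : Finset Edge) :
    LegalMove board h k mv ↔ Leg E (allClaimed h) k mv := by
  subst hb
  unfold LegalMove Leg
  norm_cast

open Classical in
lemma makerWins_of_PW (E : Finset Edge) (board : Set Edge) (hb : board = ↑E) (p : ℕ)
    (win : Set Edge → Prop) (K : ℕ)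
    (hK : PW E (fun s => win ↑s) p K ∅ ∅) : MakerWins board win p p := by
  let good : List (Finset Edge) → Finset Edge → Prop := fun h a =>
    Leg E (firstClaimed h ∪ secondClaimed h) p a ∧
    ∀ b, Leg E (firstClaimed h ∪ a ∪ secondClaimed h) p b →
      PW E (fun s => win ↑s) p (K - h.length / 2 - 1) (firstClaimed h ∪ a) (secondClaimed h ∪ b)
  have hex : ∀ h : List (Finset Edge), ∃ a,
      Leg E (firstClaimed h ∪ secondClaimed h) p a ∧ ((∃ a, good h a) → good h a) := by
    intro h
    by_cases hg : ∃ a, good h a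
    · obtain ⟨a, ha⟩ := hg
      exact ⟨a, ha.1, fun _ => ha⟩
    · obtain ⟨a, -, ha⟩ := exists_leg E (firstClaimed h ∪ secondClaimed h) ∅ p (by simp) (by simp)
      exact ⟨a, ha, fun h => absurd h hg⟩
  choose σ hσ1 hσ2 using hex
  refine ⟨σ, fun τ hτ => ⟨?_, ?_⟩⟩
  · intro t
    rw [legalMove_iff E board hb, allClaimed_eq]
    exact hσ1 _
  · have key : ∀ t, t ≤ K → PW E (fun s => win ↑s) p (K - t)
        (firstClaimed (hist σ τ t)) (secondClaimed (hist σ τ t)) := by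
      intro t
      induction t with
      | zero =>
        intro _
        simpa [hist, firstClaimed, secondClaimed, altUnion] using hK
      | succ t ih =>
        intro ht
        have h1 := ih (by omega)
        have hev : Even (hist σ τ t).length := by rw [hist_length]; exact even_two_mul t
        have hk : K - t = (K - (hist σ τ t).length / 2 - 1) + 1 := by
          rw [hist_length]; omega
        rw [hk] at h1
        have h2 : good (hist σ τ t) (σ (hist σ τ t)) := hσ2 _ h1
        have h3 := hτ t
        rw [legalMove_iff E board hb, allClaimed_eq] at h3
        have e1 : firstClaimed (hist σ τ t ++ [σ (hist σ τ t)])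
            = firstClaimed (hist σ τ t) ∪ σ (hist σ τ t) := by
          simp [firstClaimed, altUnion_append _ hev, altUnion]
        have e2 : secondClaimed (hist σ τ t ++ [σ (hist σ τ t)])
            = secondClaimed (hist σ τ t) := by
          simp [secondClaimed, altUnion_append _ hev, altUnion]
        rw [e1, e2] at h3
        have h4 := h2.2 _ h3
        have e3 : firstClaimed (hist σ τ (t+1))
            = firstClaimed (hist σ τ t) ∪ σ (hist σ τ t) := by
          simp [hist, firstClaimed, altUnion_append _ hev, altUnion]
        have e4 : secondClaimed (hist σ τ (t+1))
            = secondClaimed (hist σ τ t) ∪ τ (hist σ τ t ++ [σ (hist σ τ t)]) := by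
          simp [hist, secondClaimed, altUnion_append _ hev, altUnion]
        rw [e3, e4]
        have hk2 : K - (t+1) = K - (hist σ τ t).length / 2 - 1 := by
          rw [hist_length]; omega
        rw [hk2]
        exact h4
    refine ⟨K, ?_⟩
    have := key K le_rfl
    rw [Nat.sub_self] at this
    exact this

lemma abel (h c : ℕ → ℤ) (N : ℕ) :
    ∑ j ∈ Finset.range (N + 1), h j * (c (j + 1) - c j) =
      h N * c (N + 1) - h 0 * c 0 - ∑ j ∈ Finset.range N, (h (j + 1) - h j) * c (j + 1) := by
  induction N with
  | zero => simp; ring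
  | succ N ih => rw [Finset.sum_range_succ, ih, Finset.sum_range_succ _ N]; ring

lemma abel2 (w c : ℕ → ℤ) (N : ℕ) :
    ∑ i ∈ Finset.range (N + 1), (w (i + 1) - w i) * c i =
      w (N + 1) * c N - w 0 * c 0 - ∑ i ∈ Finset.range N, w (i + 1) * (c (i + 1) - c i) := by
  induction N with
  | zero => simp; ring
  | succ N ih => rw [Finset.sum_range_succ, ih, Finset.sum_range_succ _ N]; ring

lemma hex_core (N : ℕ) (a c : ℕ → ℕ → ℤ)
    (ha0 : ∀ j, j < N + 1 → a 0 j = 1) (ha1 : ∀ j, j < N + 1 → a (N + 1) j = 0)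
    (hc0 : ∀ i, i < N + 1 → c i 0 = 1) (hc1 : ∀ i, i < N + 1 → c i (N + 1) = 0)
    (hH : ∀ i j, i < N + 1 → j < N + 1 → (a (i + 1) j - a i j) * (c i (j + 1) - c i j) = 0)
    (hV : ∀ i j, i < N → j < N →
      (a (i + 1) (j + 1) - a (i + 1) j) * (c (i + 1) (j + 1) - c i (j + 1)) = 0) : False := by
  have h1 : ∀ i ∈ Finset.range (N + 1), a (i + 1) 0 - a i 0 =
      - ∑ j ∈ Finset.range N,
        ((a (i + 1) (j + 1) - a (i + 1) j) - (a i (j + 1) - a i j)) * c i (j + 1) := by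
    intro i hi
    rw [Finset.mem_range] at hi
    have h := abel (fun j => a (i + 1) j - a i j) (c i) N
    rw [Finset.sum_eq_zero (fun j hj => hH i j hi (Finset.mem_range.1 hj)), hc0 i hi, hc1 i hi] at h
    have e : ∑ j ∈ Finset.range N,
        ((a (i + 1) (j + 1) - a (i + 1) j) - (a i (j + 1) - a i j)) * c i (j + 1)
        = ∑ j ∈ Finset.range N,
          ((a (i + 1) (j + 1) - a i (j + 1)) - (a (i + 1) j - a i j)) * c i (j + 1) :=
      Finset.sum_congr rfl (fun j _ => by ring)
    rw [e]
    linarith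
  have h2 := Finset.sum_congr rfl h1
  rw [Finset.sum_range_sub (fun i => a i 0), ha0 0 (by omega), ha1 0 (by omega),
    Finset.sum_neg_distrib, Finset.sum_comm] at h2
  rw [Finset.sum_eq_zero] at h2
  · norm_num at h2
  · intro j hj
    rw [Finset.mem_range] at hj
    have h := abel2 (fun i => a i (j + 1) - a i j) (fun i => c i (j + 1)) N
    rw [h, Finset.sum_eq_zero (fun i hi => hV i j (Finset.mem_range.1 hi) hj),
      ha0 j (by omega), ha0 (j+1) (by omega), ha1 j (by omega), ha1 (j+1) (by omega)]
    ring

def adj (S : Set Edge) (u v : Vtx) : Prop := ∃ e ∈ S, joins e u v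

def Rch (N : ℕ) (S : Set Edge) (v : Vtx) : Prop :=
  ∃ u ∈ lamVtx (N + 2) (N + 1), u.1 = 1 ∧ Relation.ReflTransGen (adj (S ∩ sEdges (N + 2) (N + 1))) u v

lemma lam_mono (m n n' : ℕ) (h : n ≤ n') : lamVtx m n ⊆ lamVtx m n' := by
  intro v hv
  simp only [lamVtx, Set.mem_ofPred_eq] at hv ⊢
  omega

lemma Rch_list (m n : ℕ) (S : Set Edge) (hS : S ⊆ sEdges m n) (u v : Vtx) (hv : v ∈ lamVtx m n)
    (h : Relation.ReflTransGen (adj S) u v) :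
    ∃ l : List Vtx, l.head? = some u ∧ l.getLast? = some v ∧ (∀ w ∈ l, w ∈ lamVtx m n) ∧
      ∀ p ∈ cp l, ∃ e ∈ S, joins e p.1 p.2 := by
  induction h using Relation.ReflTransGen.head_induction_on with
  | refl => exact ⟨[v], by simp, by simp, by simpa using hv, by simp [cp]⟩
  | head huw _ ih =>
    rename_i u w _
    obtain ⟨l, h1, h2, h3, h4⟩ := ih
    obtain ⟨e, he, hj⟩ := huw
    cases l with
    | nil => simp at h1
    | cons x l =>
      simp only [List.head?_cons, Option.some.injEq] at h1
      subst h1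
      refine ⟨u :: x :: l, rfl, by simpa using h2, ?_, ?_⟩
      · intro z hz
        rcases List.mem_cons.1 hz with rfl | hz
        · have := (hS he).1
          rcases hj with ⟨rfl, _⟩ | ⟨_, rfl⟩
          · exact this.1
          · exact this.2
        · exact h3 z hz
      · intro p hp
        have : cp (u :: x :: l) = (u, x) :: cp (x :: l) := by simp [cp]
        rw [this] at hp
        rcases List.mem_cons.1 hp with rfl | hp
        · exact ⟨e, he, hj⟩
        · exact h4 p hp

lemma Rch_crossing (N n : ℕ) (hn : N + 1 ≤ n) (S : Set Edge) (v : Vtx)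
    (hv : v ∈ lamVtx (N + 2) (N + 1)) (hv1 : v.1 = (N : ℤ) + 2) (h : Rch N S v) :
    HasCrossing (N + 2) n S := by
  obtain ⟨u, hu, hu1, h⟩ := h
  obtain ⟨l, h1, h2, h3, h4⟩ := Rch_list (N+2) (N+1) _ Set.inter_subset_right u v hv h
  refine ⟨l, ⟨u, h1, hu1⟩, ⟨v, h2, by rw [hv1]; push_cast; ring⟩, fun w hw => lam_mono _ _ _ hn (h3 w hw), ?_⟩
  intro p hp
  obtain ⟨e, he, hj⟩ := h4 p hp
  exact ⟨e, he.1, hj⟩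

lemma joins_symm {e : Edge} {u v : Vtx} (h : joins e u v) : joins e v u := Or.symm h

lemma Rch_iff (N : ℕ) (S : Set Edge) (e : Edge) (u v : Vtx) (he : e ∈ S)
    (he' : e ∈ sEdges (N + 2) (N + 1)) (hj : joins e u v) : Rch N S u ↔ Rch N S v := by
  constructor
  · rintro ⟨w, h1, h2, h3⟩
    exact ⟨w, h1, h2, h3.tail ⟨e, ⟨he, he'⟩, hj⟩⟩
  · rintro ⟨w, h1, h2, h3⟩
    exact ⟨w, h1, h2, h3.tail ⟨e, ⟨he, he'⟩, joins_symm hj⟩⟩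

def dual : Edge → Edge
  | ((x, y), true) => ((y, x), true)
  | ((x, y), false) => ((y + 1, x - 1), false)

lemma dual_dual (e : Edge) : dual (dual e) = e := by
  obtain ⟨⟨x, y⟩, b⟩ := e
  cases b <;> simp [dual]

lemma mem_s_true (m n : ℕ) (x y : ℤ) : ((x, y), true) ∈ sEdges m n ↔
    1 ≤ x ∧ x + 1 ≤ m ∧ 1 ≤ y ∧ y ≤ n := by
  simp [sEdges, lamEdges, lamVtx, ends]
  omega

lemma mem_s_false (m n : ℕ) (x y : ℤ) : ((x, y), false) ∈ sEdges m n ↔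
    2 ≤ x ∧ x + 1 ≤ m ∧ 1 ≤ y ∧ y + 1 ≤ n := by
  simp [sEdges, lamEdges, lamVtx, ends]
  omega

lemma dual_mem (N : ℕ) (e : Edge) (he : e ∈ sEdges (N + 2) (N + 1)) :
    dual e ∈ sEdges (N + 2) (N + 1) := by
  obtain ⟨⟨x, y⟩, b⟩ := e
  cases b
  · simp only [dual, mem_s_false] at he ⊢
    push_cast at he ⊢
    omega
  · simp only [dual, mem_s_true] at he ⊢
    push_cast at he ⊢
    omega

open Classical in
lemma crossing_or (N n : ℕ) (hn : N + 1 ≤ n) (S T : Set Edge)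
    (hT : ∀ e ∈ sEdges (N + 2) (N + 1), e ∉ S → dual e ∈ T) :
    HasCrossing (N + 2) n S ∨ HasCrossing (N + 2) n T := by
  by_contra hcon
  push Not at hcon
  obtain ⟨hS, hT'⟩ := hcon
  have h0 : ∀ (U : Set Edge) (j : ℕ), j < N + 1 → Rch N U (1, (j : ℤ) + 1) := by
    intro U j hj
    refine ⟨(1, (j : ℤ) + 1), ?_, rfl, Relation.ReflTransGen.refl⟩
    refine ⟨le_refl (1 : ℤ), ?_, ?_, ?_⟩
    · dsimp only; omega
    · dsimp only; omega
    · dsimp only; omega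
  have h1 : ∀ (U : Set Edge) (j : ℕ), ¬ HasCrossing (N + 2) n U → j < N + 1 →
      ¬ Rch N U ((N : ℤ) + 2, (j : ℤ) + 1) := by
    intro U j hU hj hR
    refine hU (Rch_crossing N n hn U _ ?_ rfl hR)
    simp only [lamVtx, Set.mem_ofPred_eq]
    push_cast
    omega
  refine hex_core N (fun i j => if Rch N S ((i : ℤ) + 1, (j : ℤ) + 1) then 1 else 0)
    (fun i j => if Rch N T ((j : ℤ) + 1, (i : ℤ) + 1) then 1 else 0) ?_ ?_ ?_ ?_ ?_ ?_
  · intro j hj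
    simpa using h0 S j hj
  · intro j hj
    have := h1 S j hS hj
    simp only [ite_eq_right_iff, one_ne_zero, imp_false]
    convert this using 3
    push_cast; ring
  · intro j hj
    simpa using h0 T j hj
  · intro j hj
    have := h1 T j hT' hj
    simp only [ite_eq_right_iff, one_ne_zero, imp_false]
    convert this using 3
    push_cast; ring
  · intro i j hi hj
    have hm : (((i : ℤ) + 1, (j : ℤ) + 1), true) ∈ sEdges (N + 2) (N + 1) := by
      rw [mem_s_true]; push_cast; omega
    by_cases he : (((i : ℤ) + 1, (j : ℤ) + 1), true) ∈ S
    · have := Rch_iff N S _ ((i : ℤ) + 1, (j : ℤ) + 1) (((i + 1 : ℕ) : ℤ) + 1, (j : ℤ) + 1) he hm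
        (by left; simp [ends])
      simp only [this, sub_self, zero_mul]
    · have := Rch_iff N T _ ((j : ℤ) + 1, (i : ℤ) + 1) (((j + 1 : ℕ) : ℤ) + 1, (i : ℤ) + 1)
        (hT _ hm he) (dual_mem _ _ hm) (by left; simp [ends, dual])
      simp only [this, sub_self, mul_zero]
  · intro i j hi hj
    have hm : (((i : ℤ) + 2, (j : ℤ) + 1), false) ∈ sEdges (N + 2) (N + 1) := by
      rw [mem_s_false]; push_cast; omega
    by_cases he : (((i : ℤ) + 2, (j : ℤ) + 1), false) ∈ S
    · have := Rch_iff N S _ (((i + 1 : ℕ) : ℤ) + 1, (j : ℤ) + 1)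
        (((i + 1 : ℕ) : ℤ) + 1, ((j + 1 : ℕ) : ℤ) + 1) he hm
        (by left; simp [ends]; ring)
      simp only [this, sub_self, zero_mul]
    · have := Rch_iff N T _ (((j + 1 : ℕ) : ℤ) + 1, (i : ℤ) + 1)
        (((j + 1 : ℕ) : ℤ) + 1, ((i + 1 : ℕ) : ℤ) + 1)
        (hT _ hm he) (dual_mem _ _ hm) (by left; simp [ends, dual]; ring_nf; simp)
      simp only [this, sub_self, mul_zero]

lemma sEdges_finite (m n : ℕ) : (sEdges m n).Finite := by
  have : (((Set.Icc (1:ℤ) m) ×ˢ (Set.Icc (1:ℤ) n)) ×ˢ (Set.univ : Set Bool)).Finite :=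
    ((Set.finite_Icc _ _).prod (Set.finite_Icc _ _)).prod Set.finite_univ
  refine this.subset ?_
  rintro ⟨⟨x, y⟩, b⟩ ⟨⟨h, -⟩, -⟩
  simp only [ends, lamVtx, Set.mem_ofPred_eq] at h
  simp only [Set.mem_prod, Set.mem_Icc, Set.mem_univ]
  tauto

lemma HasCrossing.mono' {m n : ℕ} {S T : Set Edge} (h : S ⊆ T) (hS : HasCrossing m n S) :
    HasCrossing m n T := by
  obtain ⟨l, h1, h2, h3, h4⟩ := hS
  refine ⟨l, h1, h2, h3, fun p hp => ?_⟩
  obtain ⟨e, he, hj⟩ := h4 p hp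
  exact ⟨e, h he, hj⟩

/-- **Proposition (i).** For all (positive) natural numbers `m, n, p` with `m ≤ n + 1`,
Maker has a winning strategy for the `(p,p)`-crossing game on `S_{m×n}`. -/
theorem maker_wins_balanced_game_on_short_board
    (m n p : ℕ) (hm : 1 ≤ m) (hn : 1 ≤ n) (hp : 1 ≤ p) (hmn : m ≤ n + 1) :
    MakerWins (sEdges m n) (HasCrossing m n) p p := by
  classical
  have hfin := sEdges_finite m n
  suffices H : ∃ k, PW hfin.toFinset (fun s => HasCrossing m n ↑s) p k ∅ ∅ by
    obtain ⟨K, hK⟩ := H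
    exact makerWins_of_PW hfin.toFinset _ (by simp) p _ K hK
  have hmono : ∀ s t : Finset Edge, s ⊆ t → HasCrossing m n ↑s → HasCrossing m n ↑t :=
    fun s t hst h => h.mono' (by exact_mod_cast hst)
  by_cases hm1 : m = 1
  · refine ⟨0, [(1, 1)], ⟨(1, 1), rfl, rfl⟩, ⟨(1, 1), rfl, by simp [hm1]⟩, ?_, by simp [cp]⟩
    intro v hv
    simp only [List.mem_singleton] at hv
    subst hv
    simp only [lamVtx, Set.mem_ofPred_eq]
    omega
  · obtain ⟨N, rfl⟩ : ∃ N, m = N + 2 := ⟨m - 2, by omega⟩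
    have hsub : sEdges (N + 2) (N + 1) ⊆ sEdges (N + 2) n := by
      intro e he
      obtain ⟨⟨h1, h2⟩, h3⟩ := he
      exact ⟨⟨lam_mono _ _ _ (by omega) h1, lam_mono _ _ _ (by omega) h2⟩, h3⟩
    refine exists_PW hfin.toFinset _ p hp hmono
      (fun e => if e ∈ sEdges (N + 2) (N + 1) then dual e else e) ?_ ?_ ?_
    · intro e
      by_cases he : e ∈ sEdges (N + 2) (N + 1)
      · simp [he, dual_mem, dual_dual]
      · simp [he]
    · intro e he
      rw [Set.Finite.mem_toFinset] at he ⊢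
      split_ifs with h
      · exact hsub (dual_mem _ _ h)
      · exact he
    · intro M hM
      refine (crossing_or N n (by omega) (↑M) _ ?_).resolve_left hM
      intro e he heM
      rw [Finset.mem_coe, Finset.mem_image]
      refine ⟨e, ?_, by simp [he]⟩
      rw [Finset.mem_sdiff, Set.Finite.mem_toFinset]
      exact ⟨hsub he, by exact_mod_cast heM⟩

end CrossingGames
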